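/- arXiv:1410.1283 — 5 statements merged into one kernel-verified Lean document; each statement's English description precedes it below -/
import Mathlib

section
/- Let L(X) = f(t) + g(t)·X be a primitive linear function over 𝔽[t] and h(t) = Σ_{j=0}^{m} A_j t^j, and set Ψ(t) = f(t)/g(t) + Σ_{j=1}^{m} A_j t^j. Suppose α lies in an algebraic closure Ω of 𝔽(A_0, …, A_m) and (L(h))(α) = 0, where L(h) = f + g·h ∈ 𝔽[A_0, …, A_m][t]. Then (L(h))'(α) = 0 if and only if Ψ'(α) = 0, where ' denotes the derivative with respect to t (in particular g(α) ≠ 0, so Ψ'(α) is defined). -/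
/-!
If `g(α) = 0`, then `(L(h))(α) = 0` forces `f(α) = 0`, contradicting a Bézout relation between
`f` and `g`. Hence `g(α) ≠ 0`. Since `h` and `Σ_{j≥1} A_j t^j` differ by the constant `A_0`,
`L(h) = g · (Ψ + A_0)`; differentiating and evaluating at a root of `L(h)`, where `Ψ + A_0`
vanishes, gives `(L(h))'(α) = g(α) Ψ'(α)`, and the equivalence follows.
-/

open Polynomial

/-- The polynomial `L(h) = f + g·h ∈ Ω[t]`, where `h = Σ_{j=0}^{m} A_j t^j` and the
coefficients of `f, g ∈ 𝔽[t]` are mapped into `Ω`. -/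
noncomputable def linSubst {𝔽 Ω : Type*} [Field 𝔽] [Field Ω] [Algebra 𝔽 Ω] {m : ℕ}
    (A : Fin (m + 1) → Ω) (f g : Polynomial 𝔽) : Polynomial Ω :=
  f.map (algebraMap 𝔽 Ω) + g.map (algebraMap 𝔽 Ω) * ∑ j : Fin (m + 1), C (A j) * X ^ (j : ℕ)

/-- The value `Ψ'(ρ)` of the derivative of `Ψ(t) = f(t)/g(t) + Σ_{j=1}^{m} A_j t^j`,
computed by the quotient rule: `Ψ'(ρ) = (f'(ρ)g(ρ) - f(ρ)g'(ρ))/g(ρ)² + Σ_{j=1}^m j·A_j·ρ^{j-1}`. -/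
noncomputable def psiDerivVal {𝔽 Ω : Type*} [Field 𝔽] [Field Ω] [Algebra 𝔽 Ω] {m : ℕ}
    (A : Fin (m + 1) → Ω) (f g : Polynomial 𝔽) (ρ : Ω) : Ω :=
  (aeval ρ (derivative f) * aeval ρ g - aeval ρ f * aeval ρ (derivative g)) / (aeval ρ g) ^ 2
    + ∑ j : Fin m, (((j : ℕ) + 1 : ℕ) : Ω) * A j.succ * ρ ^ (j : ℕ)

set_option synthInstance.maxHeartbeats 1000000 in
set_option maxHeartbeats 1000000 in
/-- Let `L(X) = f + g·X` be a primitive linear function over `𝔽[t]`,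
`h = Σ_{j=0}^m A_j t^j`, `Ψ(t) = f(t)/g(t) + Σ_{j=1}^m A_j t^j`. If `α` in an algebraic
closure `Ω` of `𝔽(A_0, …, A_m)` satisfies `(L(h))(α) = 0`, then `g(α) ≠ 0` (so `Ψ'(α)` is
defined) and `(L(h))'(α) = 0 ↔ Ψ'(α) = 0`. -/
theorem stmt_3 (𝔽 : Type*) [Field 𝔽] [IsAlgClosed 𝔽] (hchar : ringChar 𝔽 ≠ 2) (m : ℕ)
    (Ω : Type*) [Field Ω] [IsAlgClosed Ω] [Algebra 𝔽 Ω]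
    (A : Fin (m + 1) → Ω) (hA : AlgebraicIndependent 𝔽 A)
    (hΩ : Algebra.IsAlgebraic (IntermediateField.adjoin 𝔽 (Set.range A)) Ω)
    (f g : Polynomial 𝔽) (hg : g ≠ 0) (hprim : IsCoprime f g)
    (α : Ω) (hroot : (linSubst A f g).eval α = 0) :
    aeval α g ≠ 0 ∧
      ((derivative (linSubst A f g)).eval α = 0 ↔ psiDerivVal A f g α = 0) := by
  have hr : aeval α f + aeval α g * (∑ j : Fin (m + 1), A j * α ^ (j : ℕ)) = 0 := by
    simpa [linSubst, eval_finsetSum, eval_map_algebraMap] using hroot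
  have hg0 : aeval α g ≠ 0 := by
    intro h0
    have hf0 : aeval α f = 0 := by simpa [h0] using hr
    obtain ⟨a, b, hab⟩ := hprim
    have h1 := congrArg (aeval α) hab
    simp [h0, hf0] at h1
  refine ⟨hg0, ?_⟩
  have hd : (derivative (linSubst A f g)).eval α = aeval α (derivative f)
      + (aeval α (derivative g) * (∑ j : Fin (m + 1), A j * α ^ (j : ℕ))
        + aeval α g * ∑ j : Fin m, (((j : ℕ) + 1 : ℕ) : Ω) * A j.succ * α ^ (j : ℕ)) := by
    have hsum : (derivative (∑ j : Fin (m + 1), C (A j) * X ^ (j : ℕ))).eval α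
        = ∑ j : Fin m, (((j : ℕ) + 1 : ℕ) : Ω) * A j.succ * α ^ (j : ℕ) := by
      rw [derivative_sum, eval_finsetSum, Fin.sum_univ_succ]
      simp only [derivative_C_mul_X_pow, eval_mul, eval_C, eval_pow, eval_X, Fin.val_zero,
        Fin.val_succ, Nat.cast_zero, mul_zero, zero_mul, zero_add, Nat.add_sub_cancel]
      exact Finset.sum_congr rfl fun j _ => by ring
    rw [linSubst, derivative_add, derivative_mul, eval_add, eval_add, eval_mul, eval_mul, hsum,
      derivative_map, derivative_map]
    simp only [eval_map_algebraMap, eval_finsetSum, eval_mul, eval_C, eval_pow, eval_X]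
  -- At a root, `f(α) = -g(α) h(α)`, which turns the quotient rule into `(L(h))'(α) = g(α) Ψ'(α)`.
  have key : (derivative (linSubst A f g)).eval α = aeval α g * psiDerivVal A f g α := by
    rw [hd, psiDerivVal, eq_neg_of_add_eq_zero_left hr]
    field_simp
    ring
  rw [key, mul_eq_zero, or_iff_right hg0]
end

section
/- Let m ≥ 2 be an integer and let L_1 = f_1 + g_1·X, L_2 = f_2 + g_2·X be distinct primitive linear functions over 𝔽[t] with deg(f_i) > deg(g_i) + m for i = 1, 2. Set Ψ_i(t) = f_i(t)/g_i(t) + Σ_{j=1}^{m} A_j t^j. Then there exist no elements ρ_1 ≠ ρ_2 in an algebraic closure Ω of 𝔽(A_0, …, A_m) satisfying the system Ψ_1'(ρ_1) = 0, Ψ_2'(ρ_2) = 0, and Ψ_1(ρ_1) = Ψ_2(ρ_2) (derivatives with respect to t). -/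
/-!
Write `hᵢ = fᵢ/gᵢ` and `P = Σ Aⱼ tʲ`. The three equations prescribe `P'(ρ₁)`, `P'(ρ₂)` and
`P(ρ₁) - P(ρ₂)` as elements of `𝔽(ρ₁, ρ₂)`, and these are linear forms in the `Aⱼ`.

If `m ≥ 3`, the three forms restricted to the coefficients of `t, t², t³` are independent (here
`2 ≠ 0` and `ρ₁ ≠ ρ₂` are used, see `cubic_coeffs_mem`), so `A₁, …, A_m` all lie in
`𝔽(ρ₁, ρ₂, A₄, …, A_m)`. That field has transcendence degree at most `m - 1`
(`card_le_eRk_of_mem_adjoin`), which contradicts the independence of the `Aⱼ`.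

If `m = 2`, the first two equations already give `A₁, A₂ ∈ 𝔽(ρ₁, ρ₂)`, so `ρ₁, ρ₂` are
algebraically independent over `𝔽`. Since `2(P(x) - P(y)) = (x - y)(P'(x) + P'(y))` for quadratic `P`,
eliminating the `Aⱼ` leaves `2(h₁(ρ₁) - h₂(ρ₂)) = (ρ₁ - ρ₂)(h₁'(ρ₁) + h₂'(ρ₂))`, which is then an
identity of rational functions in two variables. Specializing the second variable to two constants
shows that `h₁'` is an affine polynomial and `h₁` a polynomial of degree at most `2`
(`natDegree_le_of_algebraicIndependent`), against `deg f₁ > deg g₁ + 2`.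
-/

open Polynomial

/-- The value `Ψ(ρ)` of `Ψ(t) = f(t)/g(t) + Σ_{j=1}^{m} A_j t^j` at `ρ ∈ Ω`. -/
noncomputable def psiVal {𝔽 Ω : Type*} [Field 𝔽] [Field Ω] [Algebra 𝔽 Ω] {m : ℕ}
    (A : Fin (m + 1) → Ω) (f g : Polynomial 𝔽) (ρ : Ω) : Ω :=
  aeval ρ f / aeval ρ g + ∑ j : Fin m, A j.succ * ρ ^ ((j : ℕ) + 1)

/-- The transcendence degree bound: algebraically independent elements of the field `𝔽(S)` number
at most the rank of `S` in the matroid of algebraic independence. -/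
lemma card_le_eRk_of_mem_adjoin {𝔽 Ω : Type*} [Field 𝔽] [Field Ω] [Algebra 𝔽 Ω] {n : ℕ}
    {x : Fin n → Ω} (hx : AlgebraicIndependent 𝔽 x) {S : Set Ω}
    (h : ∀ i, x i ∈ IntermediateField.adjoin 𝔽 S) :
    (n : ℕ∞) ≤ (AlgebraicIndependent.matroid 𝔽 Ω).eRk S := by
  have hind : (AlgebraicIndependent.matroid 𝔽 Ω).Indep (Set.range x) :=
    AlgebraicIndependent.matroid_indep_iff.mpr hx.to_subtype_range
  have hsub : Set.range x ⊆ (AlgebraicIndependent.matroid 𝔽 Ω).closure S := by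
    rintro _ ⟨i, rfl⟩
    rw [AlgebraicIndependent.matroid_closure_eq, SetLike.mem_coe, Subalgebra.mem_algebraicClosure]
    obtain ⟨r, hr, s, hs, hrs⟩ := IntermediateField.mem_adjoin_iff_div.mp (h i)
    have hr' : IsAlgebraic (Algebra.adjoin 𝔽 S) r :=
      isAlgebraic_algebraMap (⟨r, hr⟩ : Algebra.adjoin 𝔽 S)
    have hs' : IsAlgebraic (Algebra.adjoin 𝔽 S) s :=
      isAlgebraic_algebraMap (⟨s, hs⟩ : Algebra.adjoin 𝔽 S)
    rw [hrs, div_eq_mul_inv]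
    exact hr'.mul hs'.inv
  calc (n : ℕ∞) = (Set.range x).encard := by
        rw [← Set.image_univ, hx.injective.encard_image, Set.encard_univ]; simp
    _ = (AlgebraicIndependent.matroid 𝔽 Ω).eRk (Set.range x) := hind.eRk_eq_encard.symm
    _ ≤ (AlgebraicIndependent.matroid 𝔽 Ω).eRk ((AlgebraicIndependent.matroid 𝔽 Ω).closure S) :=
        Matroid.eRk_mono _ hsub
    _ = _ := Matroid.eRk_closure_eq _ _

lemma aeval_mem_of_mem {𝔽 Ω : Type*} [Field 𝔽] [Field Ω] [Algebra 𝔽 Ω]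
    (E : IntermediateField 𝔽 Ω) {ρ : Ω} (hρ : ρ ∈ E) (p : Polynomial 𝔽) : aeval ρ p ∈ E := by
  have := (aeval (⟨ρ, hρ⟩ : E) p).2
  rwa [← IntermediateField.coe_val, ← aeval_algHom_apply] at this

/-- The conditions `P'(x) = u`, `P'(y) = v` and `P(x) - P(y) = w` determine the three coefficients of
`P = at + bt² + ct³` rationally when `x ≠ y` and `2 ≠ 0`; here `c` comes from the identity
`2w - (x - y)(u + v) = -c(x - y)³`. -/
lemma cubic_coeffs_mem {𝔽 Ω : Type*} [Field 𝔽] [Field Ω] [Algebra 𝔽 Ω]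
    (E : IntermediateField 𝔽 Ω) (h2 : (2 : Ω) ≠ 0) {x y a b c u v w : Ω} (hxy : x ≠ y)
    (hx : x ∈ E) (hy : y ∈ E) (hu : u ∈ E) (hv : v ∈ E) (hw : w ∈ E)
    (h₁ : a + 2 * b * x + 3 * c * x ^ 2 = u)
    (h₂ : a + 2 * b * y + 3 * c * y ^ 2 = v)
    (h₃ : a * (x - y) + b * (x ^ 2 - y ^ 2) + c * (x ^ 3 - y ^ 3) = w) :
    a ∈ E ∧ b ∈ E ∧ c ∈ E := by
  have hd : x - y ≠ 0 := sub_ne_zero.mpr hxy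
  have e2 : (2 : Ω) ∈ E := ofNat_mem E 2
  have e3 : (3 : Ω) ∈ E := ofNat_mem E 3
  have hc : c = ((x - y) * (u + v) - 2 * w) / (x - y) ^ 3 := by
    rw [eq_div_iff (pow_ne_zero _ hd), ← h₁, ← h₂, ← h₃]; ring
  have hc' : c ∈ E := by
    rw [hc]
    exact div_mem (sub_mem (mul_mem (sub_mem hx hy) (add_mem hu hv)) (mul_mem e2 hw))
      (pow_mem (sub_mem hx hy) 3)
  have hb : b = (u - v - 3 * c * (x ^ 2 - y ^ 2)) / (2 * (x - y)) := by
    rw [eq_div_iff (mul_ne_zero h2 hd), ← h₁, ← h₂]; ring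
  have hb' : b ∈ E := by
    rw [hb]
    exact div_mem (sub_mem (sub_mem hu hv)
      (mul_mem (mul_mem e3 hc') (sub_mem (pow_mem hx 2) (pow_mem hy 2))))
      (mul_mem e2 (sub_mem hx hy))
  refine ⟨?_, hb', hc'⟩
  have ha : a = u - 2 * b * x - 3 * c * x ^ 2 := by rw [← h₁]; ring
  rw [ha]
  exact sub_mem (sub_mem hu (mul_mem (mul_mem e2 hb') hx))
    (mul_mem (mul_mem e3 hc') (pow_mem hx 2))

/-- With `h = f/g`, `h' = N/g²`, the hypothesis reads `2(h(X) - s) = (X - y)(h'(X) + r)`. Two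
instances of it with different `y` make `h'` an affine polynomial, and then `h` a quadratic one. -/
lemma natDegree_le_of_two_instances {𝔽 : Type*} [Field 𝔽] (h2 : (2 : 𝔽) ≠ 0)
    {f g N : Polynomial 𝔽} (hg : g ≠ 0) {y z s r s' r' : 𝔽} (hyz : y ≠ z)
    (h : C 2 * (f * g - C s * g ^ 2) = (X - C y) * (N + C r * g ^ 2))
    (h' : C 2 * (f * g - C s' * g ^ 2) = (X - C z) * (N + C r' * g ^ 2)) :
    f.natDegree ≤ g.natDegree + 2 := by
  have hd : z - y ≠ 0 := sub_ne_zero.mpr hyz.symm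
  have hN : C (z - y) * N =
      g ^ 2 * (C (2 * (s' - s)) - C r * (X - C y) + C r' * (X - C z)) := by
    simp only [C_sub, C_mul]
    linear_combination h' - h
  have hf : C (2 * (z - y)) * f = g * (C (2 * (z - y) * s) + (X - C y) *
      ((C (2 * (s' - s)) - C r * (X - C y) + C r' * (X - C z)) + C ((z - y) * r))) := by
    apply mul_right_cancel₀ hg
    simp only [C_sub, C_mul] at hN ⊢
    linear_combination (C z - C y) * h + (X - C y) * hN
  have hdeg := congrArg natDegree hf
  rw [natDegree_C_mul (mul_ne_zero h2 hd)] at hdeg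
  rw [hdeg]
  refine natDegree_mul_le.trans (Nat.add_le_add_left ?_ _)
  compute_degree

/-- If `ρ₁, ρ₂` are algebraically independent, then `2(h₁(ρ₁) - h₂(ρ₂)) = (ρ₁ - ρ₂)(h₁'(ρ₁) + h₂'(ρ₂))`
is an identity in two variables, where `hᵢ = fᵢ/gᵢ` and `hᵢ' = Nᵢ/gᵢ²`; specializing the second variable
to two constants forces `deg f₁ ≤ deg g₁ + 2`. -/
lemma natDegree_le_of_algebraicIndependent {𝔽 Ω : Type*} [Field 𝔽] [Infinite 𝔽] [Field Ω]
    [Algebra 𝔽 Ω] (h2 : (2 : 𝔽) ≠ 0) {f₁ g₁ N₁ f₂ g₂ N₂ : Polynomial 𝔽} (hg₁ : g₁ ≠ 0)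
    (hg₂ : g₂ ≠ 0) {ρ₁ ρ₂ : Ω} (hρ : AlgebraicIndependent 𝔽 ![ρ₁, ρ₂])
    (hρ₁ : aeval ρ₁ g₁ ≠ 0) (hρ₂ : aeval ρ₂ g₂ ≠ 0)
    (h : 2 * (aeval ρ₁ f₁ / aeval ρ₁ g₁ - aeval ρ₂ f₂ / aeval ρ₂ g₂) =
      (ρ₁ - ρ₂) * (aeval ρ₁ N₁ / aeval ρ₁ g₁ ^ 2 + aeval ρ₂ N₂ / aeval ρ₂ g₂ ^ 2)) :
    f₁.natDegree ≤ g₁.natDegree + 2 := by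
  -- The equation with denominators cleared, as a polynomial in the two variables.
  let x : MvPolynomial (Fin 2) 𝔽 := MvPolynomial.X 0
  let y : MvPolynomial (Fin 2) 𝔽 := MvPolynomial.X 1
  let G : MvPolynomial (Fin 2) 𝔽 :=
    2 * (aeval x f₁ * aeval x g₁ * aeval y g₂ ^ 2 - aeval y f₂ * aeval y g₂ * aeval x g₁ ^ 2) -
      (x - y) * (aeval x N₁ * aeval y g₂ ^ 2 + aeval y N₂ * aeval x g₁ ^ 2)
  have hG : G = 0 := by
    apply (algebraicIndependent_iff.mp hρ)
    simp only [G, map_sub, map_mul, map_add, map_pow, map_ofNat, ← aeval_algHom_apply, x, y,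
      MvPolynomial.aeval_X, Matrix.cons_val_zero, Matrix.cons_val_one]
    field_simp at h
    linear_combination h
  have key : ∀ c : 𝔽, g₂.eval c ≠ 0 →
      C 2 * (f₁ * g₁ - C (f₂.eval c / g₂.eval c) * g₁ ^ 2) =
        (X - C c) * (N₁ + C (N₂.eval c / g₂.eval c ^ 2) * g₁ ^ 2) := by
    intro c hc
    have hs := congrArg (MvPolynomial.aeval ![(X : Polynomial 𝔽), C c]) hG
    have hC : ∀ p : Polynomial 𝔽, aeval (C c) p = C (p.eval c) := fun p => by
      rw [← algebraMap_eq, aeval_algebraMap_apply, coe_aeval_eq_eval]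
    simp only [G, map_sub, map_mul, map_add, map_pow, map_ofNat, ← aeval_algHom_apply, x, y,
      MvPolynomial.aeval_X, Matrix.cons_val_zero, Matrix.cons_val_one, map_zero, hC,
      aeval_X_left_apply] at hs
    have hcc : (C (g₂.eval c) : Polynomial 𝔽) ≠ 0 := C_ne_zero.mpr hc
    have e1 : C (f₂.eval c / g₂.eval c) * C (g₂.eval c) = C (f₂.eval c) := by
      rw [← C_mul, div_mul_cancel₀ _ hc]
    have e2 : C (N₂.eval c / g₂.eval c ^ 2) * C (g₂.eval c) ^ 2 = C (N₂.eval c) := by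
      rw [← C_pow, ← C_mul, div_mul_cancel₀ _ (pow_ne_zero 2 hc)]
    apply mul_right_cancel₀ (pow_ne_zero 2 hcc)
    rw [show (C 2 : Polynomial 𝔽) = 2 from rfl]
    linear_combination hs - 2 * g₁ ^ 2 * C (g₂.eval c) * e1 - (X - C c) * g₁ ^ 2 * e2
  classical
  obtain ⟨c, hc⟩ : ∃ c, c ∉ g₂.roots.toFinset := Infinite.exists_notMem_finset _
  obtain ⟨d, hd⟩ : ∃ d, d ∉ insert c g₂.roots.toFinset := by
    exact Infinite.exists_notMem_finset _
  simp only [Finset.mem_insert, Multiset.mem_toFinset, mem_roots hg₂, IsRoot.def, not_or] at hc hd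
  exact natDegree_le_of_two_instances h2 hg₁ (Ne.symm hd.1) (key c hc) (key d hd.2)

set_option synthInstance.maxHeartbeats 1000000 in
set_option maxHeartbeats 1000000 in
/-- Let `m ≥ 2` and let `L_1 = f_1 + g_1·X`, `L_2 = f_2 + g_2·X` be distinct
primitive linear functions over `𝔽[t]` with `deg f_i > deg g_i + m`, and let
`Ψ_i(t) = f_i(t)/g_i(t) + Σ_{j=1}^m A_j t^j`. Then there are no `ρ_1 ≠ ρ_2` in an algebraic
closure `Ω` of `𝔽(A_0, …, A_m)` (with each `ρ_i` not a pole of `Ψ_i`, i.e. `g_i(ρ_i) ≠ 0`)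
satisfying `Ψ_1'(ρ_1) = 0`, `Ψ_2'(ρ_2) = 0` and `Ψ_1(ρ_1) = Ψ_2(ρ_2)`. -/
theorem stmt_5 (𝔽 : Type*) [Field 𝔽] [IsAlgClosed 𝔽] (hchar : ringChar 𝔽 ≠ 2) (m : ℕ)
    (hm : 2 ≤ m)
    (Ω : Type*) [Field Ω] [IsAlgClosed Ω] [Algebra 𝔽 Ω]
    (A : Fin (m + 1) → Ω) (hA : AlgebraicIndependent 𝔽 A)
    (hΩ : Algebra.IsAlgebraic (IntermediateField.adjoin 𝔽 (Set.range A)) Ω)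
    (f₁ g₁ f₂ g₂ : Polynomial 𝔽) (hg₁ : g₁ ≠ 0) (hg₂ : g₂ ≠ 0)
    (hprim₁ : IsCoprime f₁ g₁) (hprim₂ : IsCoprime f₂ g₂)
    (hdist : f₁ * g₂ ≠ f₂ * g₁)
    (hdeg₁ : g₁.natDegree + m < f₁.natDegree) (hdeg₂ : g₂.natDegree + m < f₂.natDegree) :
    ¬ ∃ ρ₁ ρ₂ : Ω, ρ₁ ≠ ρ₂ ∧ aeval ρ₁ g₁ ≠ 0 ∧ aeval ρ₂ g₂ ≠ 0 ∧
        psiDerivVal A f₁ g₁ ρ₁ = 0 ∧ psiDerivVal A f₂ g₂ ρ₂ = 0 ∧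
        psiVal A f₁ g₁ ρ₁ = psiVal A f₂ g₂ ρ₂ := by
  rintro ⟨ρ₁, ρ₂, hne, hρ₁, hρ₂, h₁, h₂, h₃⟩
  have h2 : (2 : 𝔽) ≠ 0 := Ring.two_ne_zero hchar
  have h2Ω : (2 : Ω) ≠ 0 := by
    have := (map_ne_zero (algebraMap 𝔽 Ω)).mpr h2
    rwa [map_ofNat] at this
  have hA' : AlgebraicIndependent 𝔽 (fun j : Fin m => A j.succ) :=
    hA.comp Fin.succ (Fin.succ_injective m)
  have haev : ∀ (E : IntermediateField 𝔽 Ω) (ρ : Ω), ρ ∈ E → ∀ f g : Polynomial 𝔽,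
      aeval ρ f / aeval ρ g ∈ E ∧
      (aeval ρ (derivative f) * aeval ρ g - aeval ρ f * aeval ρ (derivative g)) /
        (aeval ρ g) ^ 2 ∈ E := fun E ρ h f g =>
    ⟨div_mem (aeval_mem_of_mem E h f) (aeval_mem_of_mem E h g),
      div_mem (sub_mem (mul_mem (aeval_mem_of_mem E h _) (aeval_mem_of_mem E h _))
        (mul_mem (aeval_mem_of_mem E h _) (aeval_mem_of_mem E h _)))
        (pow_mem (aeval_mem_of_mem E h g) 2)⟩
  rcases hm.eq_or_lt with rfl | hm3
  · simp only [psiDerivVal, psiVal, Fin.sum_univ_two] at h₁ h₂ h₃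
    simp only [Fin.val_zero, Fin.val_one, zero_add, pow_zero, pow_one, mul_one, Nat.cast_one,
      one_mul, Nat.reduceAdd, Nat.cast_ofNat] at h₁ h₂ h₃
    set a := A (Fin.succ 0)
    set b := A (Fin.succ 1)
    let E := IntermediateField.adjoin 𝔽 {ρ₁, ρ₂}
    have m₁ : ρ₁ ∈ E := IntermediateField.subset_adjoin _ _ (by simp)
    have m₂ : ρ₂ ∈ E := IntermediateField.subset_adjoin _ _ (by simp)
    obtain ⟨q₁, d₁⟩ := haev E ρ₁ m₁ f₁ g₁
    obtain ⟨q₂, d₂⟩ := haev E ρ₂ m₂ f₂ g₂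
    -- A quadratic `P` is a cubic one with leading coefficient `0`.
    obtain ⟨ha, hb, -⟩ := cubic_coeffs_mem E h2Ω (a := a) (b := b) (c := 0) hne m₁ m₂
      (neg_mem d₁) (neg_mem d₂) (sub_mem q₂ q₁)
      (by linear_combination h₁) (by linear_combination h₂) (by linear_combination h₃)
    have hrk := card_le_eRk_of_mem_adjoin hA' (S := {ρ₁, ρ₂}) (by
      intro i
      fin_cases i
      · exact ha
      · exact hb)
    have hind : (AlgebraicIndependent.matroid 𝔽 Ω).Indep {ρ₁, ρ₂} := by
      rw [Matroid.indep_iff_eRk_eq_encard_of_finite (Set.toFinite _)]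
      refine le_antisymm (Matroid.eRk_le_encard _ _) ?_
      rw [Set.encard_pair hne]
      exact_mod_cast hrk
    have hρ : AlgebraicIndependent 𝔽 ![ρ₁, ρ₂] := by
      have hinj : Function.Injective ![ρ₁, ρ₂] := by
        intro i j hij
        fin_cases i <;> fin_cases j <;> simp_all
      rw [← algebraicIndependent_subtype_range hinj]
      rw [AlgebraicIndependent.matroid_indep_iff] at hind
      have hrange : Set.range ![ρ₁, ρ₂] = {ρ₁, ρ₂} := by
        simp [Matrix.range_cons, Matrix.range_empty, Set.pair_comm]
      rw [hrange]
      exact hind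
    have := natDegree_le_of_algebraicIndependent h2
      (f₁ := f₁) (f₂ := f₂) (N₁ := derivative f₁ * g₁ - f₁ * derivative g₁)
      (N₂ := derivative f₂ * g₂ - f₂ * derivative g₂) hg₁ hg₂ hρ hρ₁ hρ₂ (by
        simp only [map_sub, map_mul]
        linear_combination 2 * h₃ - (ρ₁ - ρ₂) * (h₁ + h₂))
    omega
  · obtain ⟨n, rfl⟩ := Nat.exists_eq_add_of_le' (show 3 ≤ m from hm3)
    -- `B` lists `A₄, …, A_m`.
    let B : Fin n → Ω := fun j => A j.succ.succ.succ.succ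
    let S : Set Ω := {ρ₁, ρ₂} ∪ Set.range B
    let E := IntermediateField.adjoin 𝔽 S
    have m₁ : ρ₁ ∈ E := IntermediateField.subset_adjoin _ _ (by simp [S])
    have m₂ : ρ₂ ∈ E := IntermediateField.subset_adjoin _ _ (by simp [S])
    have mB : ∀ j, B j ∈ E := fun j => IntermediateField.subset_adjoin _ _ (by simp [S])
    obtain ⟨q₁, d₁⟩ := haev E ρ₁ m₁ f₁ g₁
    obtain ⟨q₂, d₂⟩ := haev E ρ₂ m₂ f₂ g₂
    simp only [psiDerivVal, psiVal, Fin.sum_univ_succ] at h₁ h₂ h₃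
    simp only [Fin.val_zero, Fin.val_succ, zero_add, pow_zero, pow_one, mul_one, Nat.cast_one,
      one_mul, Nat.reduceAdd, Nat.cast_ofNat] at h₁ h₂ h₃
    have tD : ∀ ρ ∈ E, ∑ j : Fin n, (((j : ℕ) + 1 + 1 + 1 + 1 : ℕ) : Ω) * B j *
        ρ ^ ((j : ℕ) + 1 + 1 + 1) ∈ E := fun ρ h =>
      sum_mem fun j _ => mul_mem (mul_mem (natCast_mem E _) (mB j)) (pow_mem h _)
    have tP : ∀ ρ ∈ E, ∑ j : Fin n, B j * ρ ^ ((j : ℕ) + 1 + 1 + 1 + 1) ∈ E := fun ρ h =>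
      sum_mem fun j _ => mul_mem (mB j) (pow_mem h _)
    obtain ⟨ha, hb, hc⟩ := cubic_coeffs_mem E h2Ω (a := A (Fin.succ 0))
      (b := A (Fin.succ (Fin.succ 0))) (c := A (Fin.succ (Fin.succ (Fin.succ 0)))) hne m₁ m₂
      (neg_mem (add_mem d₁ (tD ρ₁ m₁))) (neg_mem (add_mem d₂ (tD ρ₂ m₂)))
      (sub_mem (add_mem q₂ (tP ρ₂ m₂)) (add_mem q₁ (tP ρ₁ m₁)))
      (by linear_combination h₁) (by linear_combination h₂) (by linear_combination h₃)
    have hrk := card_le_eRk_of_mem_adjoin hA' (S := S) (by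
      intro i
      refine Fin.cases ha (fun i => ?_) i
      refine Fin.cases hb (fun i => ?_) i
      refine Fin.cases hc (fun i => ?_) i
      exact mB i)
    have hS : S.encard ≤ 2 + n := by
      refine (Set.encard_union_le _ _).trans (add_le_add (Set.encard_pair hne).le ?_)
      rw [← Set.image_univ]
      refine (Set.encard_image_le _ _).trans ?_
      simp [Set.encard_univ]
    have hlt := (hrk.trans (Matroid.eRk_le_encard _ _)).trans hS
    have : n + 3 ≤ 2 + n := by exact_mod_cast hlt
    omega
end

section
/- Let 𝔽 be an algebraically closed field of characteristic ≠ 2 and let ψ_1, ψ_2 ∈ 𝔽(x) be rational functions in one variable such that the identity 2(ψ_1(x) − ψ_2(y)) = (x − y)(ψ_1'(x) + ψ_2'(y)) holds in the rational function field 𝔽(x, y), where ' denotes the formal derivative. Then ψ_1 = ψ_2, and this common rational function is a polynomial of degree at most 2. -/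
/-!
The identity is only used through its specializations `y := t` at elements `t ∈ 𝔽(x)` that are not
poles of `ψ₂` or `ψ₂'` (`specialize_identity`). Taking `t = x` gives `2 (ψ₁ - ψ₂) = 0`. Taking two
distinct constants `t = a`, `t = b`, which exist because `𝔽` is infinite, and subtracting the
resulting equations eliminates `ψ₁`:
`(b - a) ψ₁' = 2 (ψ₂(b) - ψ₂(a)) + (x - b) ψ₂'(b) - (x - a) ψ₂'(a)`.
So `ψ₁'` is a polynomial of degree at most `1`, and the equation
`2 ψ₁ = 2 ψ₂(a) + (x - a) (ψ₁' + ψ₂'(a))` exhibits `ψ₁` as a polynomial of degree at most `2`.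
No property of the derivative is needed, so the auxiliary lemmas have arbitrary rational functions
`θ₁`, `θ₂` in place of `ψ₁'`, `ψ₂'`.
-/

/-- The formal derivative of a rational function `ψ = num/denom ∈ 𝔽(x)`, given by the
quotient rule `ψ' = (num'·denom - num·denom')/denom²`. -/
noncomputable def ratDeriv {K : Type*} [Field K] (ψ : RatFunc K) : RatFunc K :=
  algebraMap (Polynomial K) (RatFunc K)
      (Polynomial.derivative ψ.num * ψ.denom - ψ.num * Polynomial.derivative ψ.denom) /
    algebraMap (Polynomial K) (RatFunc K) (ψ.denom ^ 2)

/-- The image `ψ(y)` of a rational function `ψ = ψ(x) ∈ 𝔽(x)` in `𝔽(x, y) = (𝔽(x))(y)`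
under `x ↦ y`: the coefficients of numerator and denominator are embedded as constants
via `RatFunc.C` and the variable becomes the outer variable `y`. -/
noncomputable def substY {K : Type*} [Field K] (ψ : RatFunc K) : RatFunc (RatFunc K) :=
  algebraMap (Polynomial (RatFunc K)) (RatFunc (RatFunc K)) (ψ.num.map RatFunc.C) /
    algebraMap (Polynomial (RatFunc K)) (RatFunc (RatFunc K)) (ψ.denom.map RatFunc.C)

open Polynomial in
/-- Specialization of the identity at `y := t`, for `t ∈ 𝔽(x)` at which the denominators of `ψ₂`
and `θ₂` do not vanish. -/
lemma specialize_identity {K : Type*} [Field K] {ψ₁ ψ₂ θ₁ θ₂ : RatFunc K}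
    (hid : 2 * ((RatFunc.C ψ₁ : RatFunc (RatFunc K)) - substY ψ₂) =
        (RatFunc.C (RatFunc.X : RatFunc K) - (RatFunc.X : RatFunc (RatFunc K))) *
          (RatFunc.C θ₁ + substY θ₂))
    (t : RatFunc K) (h₂ : ψ₂.denom.eval₂ RatFunc.C t ≠ 0) (h₂' : θ₂.denom.eval₂ RatFunc.C t ≠ 0) :
    2 * (ψ₁ - ψ₂.eval RatFunc.C t) = (RatFunc.X - t) * (θ₁ + θ₂.eval RatFunc.C t) := by
  have hne (χ : RatFunc K) :
      algebraMap (RatFunc K)[X] (RatFunc (RatFunc K)) (χ.denom.map RatFunc.C) ≠ 0 := by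
    rw [Ne, FaithfulSMul.algebraMap_eq_zero_iff, Polynomial.map_eq_zero]
    exact χ.denom_ne_zero
  have hpoly : 2 * (C ψ₁ * ψ₂.denom.map RatFunc.C - ψ₂.num.map RatFunc.C) *
        θ₂.denom.map RatFunc.C =
      (C RatFunc.X - X) * (C θ₁ * θ₂.denom.map RatFunc.C + θ₂.num.map RatFunc.C) *
        ψ₂.denom.map RatFunc.C := by
    apply IsFractionRing.injective (RatFunc K)[X] (RatFunc (RatFunc K))
    have h1 := hne ψ₂
    have h2 := hne θ₂
    unfold substY at hid
    simp only [map_mul, map_sub, map_add, map_ofNat, RatFunc.algebraMap_C, RatFunc.algebraMap_X]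
    field_simp at hid
    linear_combination hid
  have h := congrArg (Polynomial.eval t) hpoly
  simp only [Polynomial.eval_mul, Polynomial.eval_sub, Polynomial.eval_add, Polynomial.eval_ofNat,
    Polynomial.eval_C, Polynomial.eval_X, Polynomial.eval_map] at h
  unfold RatFunc.eval
  field_simp
  linear_combination h

lemma eval₂_C_X_ne_zero {K : Type*} [Field K] {p : Polynomial K} (hp : p ≠ 0) :
    p.eval₂ RatFunc.C (RatFunc.X : RatFunc K) ≠ 0 := by
  rw [← RatFunc.algebraMap_X, ← RatFunc.algebraMap_comp_C, ← Polynomial.hom_eval₂,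
    Polynomial.eval₂_C_X]
  simpa using hp

/-- Evaluating a rational function at a constant gives a constant. -/
lemma eval_C_C {K : Type*} [Field K] (χ : RatFunc K) (a : K) :
    χ.eval RatFunc.C (RatFunc.C a) = RatFunc.C (χ.num.eval a / χ.denom.eval a) := by
  simp [RatFunc.eval, Polynomial.eval₂_at_apply]

/-- Let `𝔽` be an algebraically closed field of characteristic `≠ 2` and
`ψ₁, ψ₂ ∈ 𝔽(x)` rational functions such that `2(ψ₁(x) − ψ₂(y)) = (x − y)(ψ₁'(x) + ψ₂'(y))`
holds in `𝔽(x, y)` (realized as `RatFunc (RatFunc 𝔽)`, with `x = RatFunc.C RatFunc.X` the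
inner variable and `y = RatFunc.X` the outer one). Then `ψ₁ = ψ₂`, and this common rational
function is a polynomial of degree at most `2`. -/
theorem stmt_8 (𝔽 : Type*) [Field 𝔽] [IsAlgClosed 𝔽] (hchar : ringChar 𝔽 ≠ 2)
    (ψ₁ ψ₂ : RatFunc 𝔽)
    (hid : 2 * ((RatFunc.C ψ₁ : RatFunc (RatFunc 𝔽)) - substY ψ₂) =
        (RatFunc.C (RatFunc.X : RatFunc 𝔽) - (RatFunc.X : RatFunc (RatFunc 𝔽))) *
          (RatFunc.C (ratDeriv ψ₁) + substY (ratDeriv ψ₂))) :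
    ψ₁ = ψ₂ ∧ ∃ p : Polynomial 𝔽, p.natDegree ≤ 2 ∧
      ψ₁ = algebraMap (Polynomial 𝔽) (RatFunc 𝔽) p := by
  have h2 : (2 : 𝔽) ≠ 0 := Ring.two_ne_zero hchar
  have h2' : (2 : RatFunc 𝔽) ≠ 0 := by
    rw [← map_ofNat (RatFunc.C (K := 𝔽)) 2]
    exact (map_ne_zero _).2 h2
  refine ⟨?_, ?_⟩
  · have h := specialize_identity hid RatFunc.X (eval₂_C_X_ne_zero ψ₂.denom_ne_zero)
      (eval₂_C_X_ne_zero (RatFunc.denom_ne_zero _))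
    have hX : ψ₂.eval RatFunc.C RatFunc.X = ψ₂ := by
      conv_rhs => rw [← RatFunc.num_div_denom ψ₂]
      unfold RatFunc.eval
      congr 1 <;>
      rw [← RatFunc.algebraMap_X, ← RatFunc.algebraMap_comp_C, ← Polynomial.hom_eval₂,
        Polynomial.eval₂_C_X]
    rw [sub_self, zero_mul, hX] at h
    exact sub_eq_zero.1 ((mul_eq_zero.1 h).resolve_left h2')
  · set θ₁ := ratDeriv ψ₁
    set θ₂ := ratDeriv ψ₂
    have : Infinite 𝔽 := IsAlgClosed.instInfinite
    classical
    have key (a : 𝔽) (ha : a ∉ (ψ₂.denom * θ₂.denom).roots.toFinset) :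
        ∃ u v : 𝔽, 2 * (ψ₁ - RatFunc.C u) =
          (RatFunc.X - RatFunc.C a) * (θ₁ + RatFunc.C v) := by
      have hne : ψ₂.denom * θ₂.denom ≠ 0 :=
        mul_ne_zero ψ₂.denom_ne_zero θ₂.denom_ne_zero
      rw [Multiset.mem_toFinset, Polynomial.mem_roots hne, Polynomial.IsRoot, Polynomial.eval_mul,
        mul_eq_zero, not_or] at ha
      have h := specialize_identity hid (RatFunc.C a)
        (by rw [Polynomial.eval₂_at_apply]; exact (map_ne_zero _).2 ha.1)
        (by rw [Polynomial.eval₂_at_apply]; exact (map_ne_zero _).2 ha.2)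
      rw [eval_C_C, eval_C_C] at h
      exact ⟨_, _, h⟩
    obtain ⟨a, ha⟩ := Infinite.exists_notMem_finset (ψ₂.denom * θ₂.denom).roots.toFinset
    obtain ⟨b, hb⟩ := Infinite.exists_notMem_finset
      (insert a (ψ₂.denom * θ₂.denom).roots.toFinset)
    rw [Finset.mem_insert, not_or] at hb
    obtain ⟨u, v, hu⟩ := key a ha
    obtain ⟨w, z, hw⟩ := key b hb.2
    have hba : b - a ≠ 0 := sub_ne_zero.2 hb.1
    -- `θ₁ = r x + s`, from the difference of the two specializations.
    obtain ⟨r, hr⟩ : ∃ r, r * (b - a) = z - v := ⟨_, div_mul_cancel₀ _ hba⟩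
    obtain ⟨s, hs⟩ : ∃ s, s * (b - a) = 2 * (w - u) - b * z + a * v := ⟨_, div_mul_cancel₀ _ hba⟩
    have hθ : θ₁ = RatFunc.C r * RatFunc.X + RatFunc.C s := by
      have hr' := congrArg (RatFunc.C (K := 𝔽)) hr
      have hs' := congrArg (RatFunc.C (K := 𝔽)) hs
      simp only [map_mul, map_sub, map_add, map_ofNat] at hr' hs'
      have hba' : RatFunc.C b - RatFunc.C a ≠ 0 := by
        rw [← map_sub]; exact (map_ne_zero _).2 hba
      apply mul_right_cancel₀ hba'
      linear_combination hw - hu - RatFunc.X * hr' - hs'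
    refine ⟨Polynomial.C 2⁻¹ * ((Polynomial.X - Polynomial.C a) *
      (Polynomial.C r * Polynomial.X + Polynomial.C (s + v))) + Polynomial.C u, ?_, ?_⟩
    · compute_degree
    · have h22 : (2 : RatFunc 𝔽) * RatFunc.C 2⁻¹ = 1 := by
        rw [← map_ofNat (RatFunc.C (K := 𝔽)) 2, ← map_mul, mul_inv_cancel₀ h2, map_one]
      simp only [map_mul, map_sub, map_add, RatFunc.algebraMap_C, RatFunc.algebraMap_X]
      apply mul_left_cancel₀ h2'
      rw [hθ] at hu
      linear_combination hu - (RatFunc.X - RatFunc.C a) *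
        (RatFunc.C r * RatFunc.X + RatFunc.C s + RatFunc.C v) * h22
end

section
/- Let 𝔽 be an algebraically closed field of characteristic ≠ 2, and for i = 1, 2 let ψ_i = f_i/g_i with f_i, g_i ∈ 𝔽[t] relatively prime and deg(f_i) > 2. Then the rational function d(x, y) = (x − y)·(2(ψ_1(x) − ψ_2(y)) − (x − y)(ψ_1'(x) + ψ_2'(y))) is not identically zero in 𝔽(x, y). -/
open Polynomial in
/-- Specialization `y = c`, carried out on the polynomial identity over `𝔽(x)` obtained by
clearing the denominators in `y`. Here `A`, `D` stand for `ψ₁`, `ψ₁'` and `φ`, `χ` for `ψ₂`, `ψ₂'`,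
but no relation between them is needed. -/
lemma specialize_at {K : Type*} [Field K] (A D φ χ : RatFunc K)
    (h : 2 * ((RatFunc.C A : RatFunc (RatFunc K)) - substY φ) -
          (RatFunc.C (RatFunc.X : RatFunc K) - (RatFunc.X : RatFunc (RatFunc K))) *
            (RatFunc.C D + substY χ) = 0)
    (c : K) (hc : (φ.denom * χ.denom).eval c ≠ 0) :
    ∃ u v : K, 2 * (A - RatFunc.C u) =
      (RatFunc.X - RatFunc.C c) * (D + RatFunc.C v) := by
  have hinj : Function.Injective (algebraMap (RatFunc K)[X] (RatFunc (RatFunc K))) :=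
    RatFunc.algebraMap_injective _
  have hden : ∀ ψ : RatFunc K,
      algebraMap (RatFunc K)[X] (RatFunc (RatFunc K)) (ψ.denom.map RatFunc.C) ≠ 0 := by
    intro ψ
    rw [Ne, map_eq_zero_iff _ hinj, Polynomial.map_eq_zero]
    exact ψ.denom_ne_zero
  have hQ := hden φ
  have hS := hden χ
  have hpoly : 2 * (C A * φ.denom.map RatFunc.C - φ.num.map RatFunc.C) * χ.denom.map RatFunc.C =
      (C RatFunc.X - X) * (C D * χ.denom.map RatFunc.C + χ.num.map RatFunc.C) *
        φ.denom.map RatFunc.C := by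
    apply hinj
    simp only [map_mul, map_sub, map_add, map_ofNat, RatFunc.algebraMap_C, RatFunc.algebraMap_X]
    unfold substY at h
    field_simp at h
    linear_combination h
  have hev := congrArg (Polynomial.eval (RatFunc.C c)) hpoly
  simp only [eval_mul, eval_sub, eval_add, eval_C, eval_X, eval_ofNat, eval_map_apply] at hev
  rw [eval_mul] at hc
  have hq : (RatFunc.C (φ.denom.eval c) : RatFunc K) ≠ 0 := by
    simpa using left_ne_zero_of_mul hc
  have hs : (RatFunc.C (χ.denom.eval c) : RatFunc K) ≠ 0 := by
    simpa using right_ne_zero_of_mul hc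
  refine ⟨φ.num.eval c / φ.denom.eval c, χ.num.eval c / χ.denom.eval c, ?_⟩
  rw [map_div₀, map_div₀]
  field_simp
  linear_combination hev

/-- Let `𝔽` be an algebraically closed field of characteristic `≠ 2` and for
`i = 1, 2` let `ψ_i = f_i/g_i` with `f_i, g_i ∈ 𝔽[t]` relatively prime and `deg f_i > 2`.
Then `d(x, y) = (x − y)·(2(ψ₁(x) − ψ₂(y)) − (x − y)(ψ₁'(x) + ψ₂'(y)))` is not identically
zero in `𝔽(x, y)` (realized as `RatFunc (RatFunc 𝔽)`, with `x = RatFunc.C RatFunc.X` the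
inner variable and `y = RatFunc.X` the outer one). -/
theorem stmt_9 (𝔽 : Type*) [Field 𝔽] [IsAlgClosed 𝔽] (hchar : ringChar 𝔽 ≠ 2)
    (f₁ g₁ f₂ g₂ : Polynomial 𝔽)
    (hprim₁ : IsCoprime f₁ g₁) (hprim₂ : IsCoprime f₂ g₂)
    (hdeg₁ : 2 < f₁.natDegree) (hdeg₂ : 2 < f₂.natDegree)
    (ψ₁ ψ₂ : RatFunc 𝔽)
    (hψ₁ : ψ₁ = algebraMap (Polynomial 𝔽) (RatFunc 𝔽) f₁ /
        algebraMap (Polynomial 𝔽) (RatFunc 𝔽) g₁)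
    (hψ₂ : ψ₂ = algebraMap (Polynomial 𝔽) (RatFunc 𝔽) f₂ /
        algebraMap (Polynomial 𝔽) (RatFunc 𝔽) g₂) :
    (RatFunc.C (RatFunc.X : RatFunc 𝔽) - (RatFunc.X : RatFunc (RatFunc 𝔽))) *
        (2 * ((RatFunc.C ψ₁ : RatFunc (RatFunc 𝔽)) - substY ψ₂) -
          (RatFunc.C (RatFunc.X : RatFunc 𝔽) - (RatFunc.X : RatFunc (RatFunc 𝔽))) *
            (RatFunc.C (ratDeriv ψ₁) + substY (ratDeriv ψ₂))) ≠ 0 := by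
  have hxy : (RatFunc.C (RatFunc.X : RatFunc 𝔽) - (RatFunc.X : RatFunc (RatFunc 𝔽))) ≠ 0 := by
    rw [← RatFunc.algebraMap_C, ← RatFunc.algebraMap_X (K := RatFunc 𝔽),
      ← map_sub, Ne,
      map_eq_zero_iff _ (RatFunc.algebraMap_injective _), ← neg_eq_zero, neg_sub]
    exact Polynomial.X_sub_C_ne_zero _
  refine mul_ne_zero hxy fun h => ?_
  have hP : ψ₂.denom * (ratDeriv ψ₂).denom ≠ 0 :=
    mul_ne_zero ψ₂.denom_ne_zero (ratDeriv ψ₂).denom_ne_zero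
  have : Infinite 𝔽 := IsAlgClosed.instInfinite
  obtain ⟨c₁, hc₁⟩ := Polynomial.exists_eval_ne_zero_of_natDegree_lt_card _ hP
    ((Cardinal.natCast_lt_aleph0).trans_le (Cardinal.aleph0_le_mk 𝔽))
  -- the extra factor `X - c₁` forces `c₂ ≠ c₁`
  obtain ⟨c₂, hc₂⟩ := Polynomial.exists_eval_ne_zero_of_natDegree_lt_card _
    (mul_ne_zero (Polynomial.X_sub_C_ne_zero c₁) hP)
    ((Cardinal.natCast_lt_aleph0).trans_le (Cardinal.aleph0_le_mk 𝔽))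
  rw [Polynomial.eval_mul] at hc₂
  have hne : c₂ - c₁ ≠ 0 := by simpa using left_ne_zero_of_mul hc₂
  obtain ⟨u₁, v₁, e₁⟩ := specialize_at _ _ _ _ h c₁ hc₁
  obtain ⟨u₂, v₂, e₂⟩ := specialize_at _ _ _ _ h c₂ (right_ne_zero_of_mul hc₂)
  have h2 : (2 : 𝔽) ≠ 0 := Ring.two_ne_zero hchar
  have hk : 2 * (c₁ - c₂) ≠ 0 := mul_ne_zero h2 (by rwa [← neg_sub, neg_ne_zero])
  have hg : g₁ ≠ 0 := by
    rintro rfl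
    have := Polynomial.natDegree_eq_zero_of_isUnit (isCoprime_zero_right.mp hprim₁)
    omega
  have hg' : algebraMap (Polynomial 𝔽) (RatFunc 𝔽) g₁ ≠ 0 := by
    rwa [Ne, map_eq_zero_iff _ (RatFunc.algebraMap_injective _)]
  -- `q = 2 (c₁ - c₂) ψ₁`, from eliminating `ψ₁'` between `e₁` and `e₂`
  set q : Polynomial 𝔽 :=
    (Polynomial.X - Polynomial.C c₂) *
        (Polynomial.C (2 * u₁) + (Polynomial.X - Polynomial.C c₁) * Polynomial.C v₁) -
      (Polynomial.X - Polynomial.C c₁) *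
        (Polynomial.C (2 * u₂) + (Polynomial.X - Polynomial.C c₂) * Polynomial.C v₂) with hq
  have hqdeg : q.natDegree ≤ 2 := by
    rw [hq]
    compute_degree
  have hfg : Polynomial.C (2 * (c₁ - c₂)) * f₁ = q * g₁ := by
    apply RatFunc.algebraMap_injective 𝔽
    have hf : algebraMap (Polynomial 𝔽) (RatFunc 𝔽) f₁ =
        ψ₁ * algebraMap (Polynomial 𝔽) (RatFunc 𝔽) g₁ := by
      rw [hψ₁, div_mul_cancel₀ _ hg']
    rw [map_mul, map_mul, hf, hq]
    simp only [map_mul, map_sub, map_add, RatFunc.algebraMap_C, RatFunc.algebraMap_X, map_ofNat]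
    linear_combination algebraMap (Polynomial 𝔽) (RatFunc 𝔽) g₁ *
      ((RatFunc.X - RatFunc.C c₂) * e₁ - (RatFunc.X - RatFunc.C c₁) * e₂)
  have hgu : IsUnit g₁ := by
    have hd : g₁ ∣ Polynomial.C (2 * (c₁ - c₂)) := hprim₁.symm.dvd_of_dvd_mul_right ⟨q, by
      rw [hfg, mul_comm]⟩
    exact isUnit_of_dvd_unit hd (Polynomial.isUnit_C.mpr hk.isUnit)
  have hdeg := congrArg Polynomial.natDegree hfg
  rw [Polynomial.natDegree_C_mul hk] at hdeg
  have := Polynomial.natDegree_mul_le (p := q) (q := g₁)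
  rw [Polynomial.natDegree_eq_zero_of_isUnit hgu] at this
  omega
end

section
/- Let L_1 = f_1 + g_1·X and L_2 = f_2 + g_2·X be distinct primitive linear functions over 𝔽[t], let m ≥ 1, and set Ψ_i(t) = f_i(t)/g_i(t) + Σ_{j=1}^{m} A_j t^j. Then there is no element ρ in an algebraic closure of 𝔽(A_0, …, A_m) satisfying Ψ_1(ρ) = Ψ_2(ρ) = −A_0; indeed, any ρ with Ψ_1(ρ) = Ψ_2(ρ) satisfies f_1(ρ)g_2(ρ) − f_2(ρ)g_1(ρ) = 0 and is therefore algebraic over 𝔽, which is incompatible with Ψ_1(ρ) = −A_0. -/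
/-!
Where neither denominator vanishes, the common summand `Σ A_j ρ^j` cancels in `Ψ₁(ρ) = Ψ₂(ρ)`,
and clearing denominators shows that `ρ` is a root of the nonzero polynomial `f₁ g₂ - f₂ g₁` over
`𝔽`. So `ρ` is algebraic over `𝔽`, and as `𝔽` is algebraically closed, `ρ` lies in `𝔽`. Then
`Ψ₁(ρ) = -A_0` is an affine-linear relation over `𝔽` between the `A_j` in which `A_0` has
coefficient `1`, contradicting algebraic independence (`psiVal_algebraMap_ne`).
-/


open Polynomial

theorem isAlgebraic_of_psiVal_eq {𝔽 Ω : Type*} [Field 𝔽] [Field Ω] [Algebra 𝔽 Ω] {m : ℕ}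
    (A : Fin (m + 1) → Ω) (f₁ g₁ f₂ g₂ : Polynomial 𝔽) (hdist : f₁ * g₂ ≠ f₂ * g₁) (ρ : Ω)
    (h₁ : aeval ρ g₁ ≠ 0) (h₂ : aeval ρ g₂ ≠ 0) (h : psiVal A f₁ g₁ ρ = psiVal A f₂ g₂ ρ) :
    aeval ρ f₁ * aeval ρ g₂ - aeval ρ f₂ * aeval ρ g₁ = 0 ∧ IsAlgebraic 𝔽 ρ := by
  have key : aeval ρ f₁ * aeval ρ g₂ - aeval ρ f₂ * aeval ρ g₁ = 0 := by
    have h' := add_right_cancel h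
    rw [div_eq_div_iff h₁ h₂] at h'
    exact sub_eq_zero.mpr h'
  exact ⟨key, f₁ * g₂ - f₂ * g₁, sub_ne_zero.mpr hdist, by simpa using key⟩

theorem psiVal_algebraMap_ne {𝔽 Ω : Type*} [Field 𝔽] [Field Ω] [Algebra 𝔽 Ω] {m : ℕ}
    (A : Fin (m + 1) → Ω) (hA : AlgebraicIndependent 𝔽 A) (f g : Polynomial 𝔽) (c : 𝔽) :
    psiVal A f g (algebraMap 𝔽 Ω c) ≠ -A 0 := by
  intro h
  let P : MvPolynomial (Fin (m + 1)) 𝔽 := MvPolynomial.X 0 + MvPolynomial.C (f.eval c / g.eval c) +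
    ∑ j : Fin m, MvPolynomial.X j.succ * MvPolynomial.C (c ^ ((j : ℕ) + 1))
  have hP : P = 0 := by
    apply (algebraicIndependent_iff.mp hA) P
    simp only [psiVal, aeval_algebraMap_apply_eq_algebraMap_eval] at h
    simp only [P, map_add, map_sum, map_mul, MvPolynomial.aeval_X, MvPolynomial.aeval_C,
      map_div₀, map_pow]
    rw [add_assoc, h, add_neg_cancel]
  -- The values of `P` at the origin and at the first basis vector differ by `1`.
  have e0 := congrArg (MvPolynomial.eval (0 : Fin (m + 1) → 𝔽)) hP
  have e1 := congrArg (MvPolynomial.eval (Pi.single 0 1 : Fin (m + 1) → 𝔽)) hP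
  simp only [P] at e0 e1
  simp [-div_eq_zero_iff] at e0 e1
  simp [e0] at e1

set_option synthInstance.maxHeartbeats 1000000 in
set_option maxHeartbeats 1000000 in
/-- Let `L_1 = f_1 + g_1·X`, `L_2 = f_2 + g_2·X` be distinct primitive linear
functions over `𝔽[t]`, `m ≥ 1`, and `Ψ_i(t) = f_i(t)/g_i(t) + Σ_{j=1}^m A_j t^j`. Then any `ρ`
in an algebraic closure `Ω` of `𝔽(A_0, …, A_m)` (not a pole of `Ψ_1, Ψ_2`) with
`Ψ_1(ρ) = Ψ_2(ρ)` satisfies `f_1(ρ)g_2(ρ) - f_2(ρ)g_1(ρ) = 0` and is therefore algebraic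
over `𝔽`; and there is no `ρ` with `Ψ_1(ρ) = Ψ_2(ρ) = -A_0`. -/
theorem stmt_11 (𝔽 : Type*) [Field 𝔽] [IsAlgClosed 𝔽] (hchar : ringChar 𝔽 ≠ 2) (m : ℕ)
    (hm : 1 ≤ m)
    (Ω : Type*) [Field Ω] [IsAlgClosed Ω] [Algebra 𝔽 Ω]
    (A : Fin (m + 1) → Ω) (hA : AlgebraicIndependent 𝔽 A)
    (hΩ : Algebra.IsAlgebraic (IntermediateField.adjoin 𝔽 (Set.range A)) Ω)
    (f₁ g₁ f₂ g₂ : Polynomial 𝔽) (hg₁ : g₁ ≠ 0) (hg₂ : g₂ ≠ 0)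
    (hprim₁ : IsCoprime f₁ g₁) (hprim₂ : IsCoprime f₂ g₂)
    (hdist : f₁ * g₂ ≠ f₂ * g₁) :
    (∀ ρ : Ω, aeval ρ g₁ ≠ 0 → aeval ρ g₂ ≠ 0 → psiVal A f₁ g₁ ρ = psiVal A f₂ g₂ ρ →
      aeval ρ f₁ * aeval ρ g₂ - aeval ρ f₂ * aeval ρ g₁ = 0 ∧ IsAlgebraic 𝔽 ρ) ∧
    ¬ ∃ ρ : Ω, aeval ρ g₁ ≠ 0 ∧ aeval ρ g₂ ≠ 0 ∧
        psiVal A f₁ g₁ ρ = -A 0 ∧ psiVal A f₂ g₂ ρ = -A 0 := by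
  have first := isAlgebraic_of_psiVal_eq A f₁ g₁ f₂ g₂ hdist
  refine ⟨first, ?_⟩
  rintro ⟨ρ, h₁, h₂, e₁, e₂⟩
  obtain ⟨-, hρ⟩ := first ρ h₁ h₂ (e₁.trans e₂.symm)
  obtain ⟨c, rfl⟩ : ρ ∈ (algebraMap 𝔽 Ω).range :=
    minpoly.mem_range_of_degree_eq_one 𝔽 ρ
      (IsAlgClosed.degree_eq_one_of_irreducible 𝔽 (minpoly.irreducible hρ.isIntegral))
  exact psiVal_algebraMap_ne A hA f₁ g₁ c e₁
end
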